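/- For every real number α ≥ 1 and every position 1 ≤ j ≤ n, LRep_α[j] = max({SC[j]} ∪ { b+ℓ−j : (a,b,ℓ) is a maximal α-gapped repeat occurrence with nonempty gap in w with b ≤ j and α·(j−b) ≤ (α−1)·ℓ − (b−a−ℓ) }). -/

import Mathlib

/- Words are `List α`, positions are 1-based.  `ltr w i` is the letter at position `i`,
`fac w i j` is the factor `w[i..j]` (empty when `i > j`). -/

variable {α : Type*}

def ltr (w : List α) (i : ℕ) : Option α := w[i - 1]?

def fac (w : List α) (i j : ℕ) : List α := (w.take j).drop (i - 1)

/-- An `A`-gapped repeat occurrence `(a,b,ℓ)` with nonempty gap in `w`: equal arms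
`w[a..a+ℓ-1] = w[b..b+ℓ-1]`, gap length `δ = b-a-ℓ ≥ 1`, and `ℓ + δ ≤ A·ℓ`. -/
def GapRepOcc (A : ℝ) (w : List α) (a b ℓ : ℕ) : Prop :=
  1 ≤ a ∧ 1 ≤ ℓ ∧ a + ℓ < b ∧ b + ℓ - 1 ≤ w.length ∧
  (∀ t < ℓ, ltr w (a + t) = ltr w (b + t)) ∧
  (ℓ : ℝ) + ((b - a - ℓ : ℕ) : ℝ) ≤ A * (ℓ : ℝ)

/-- A maximal `A`-gapped repeat occurrence: the arms can be extended neither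
simultaneously to the right nor simultaneously to the left. -/
def MaxGapRepOcc (A : ℝ) (w : List α) (a b ℓ : ℕ) : Prop :=
  GapRepOcc A w a b ℓ ∧
  ¬(2 ≤ b - a - ℓ ∧ b + ℓ ≤ w.length ∧ ltr w (a + ℓ) = ltr w (b + ℓ)) ∧
  ¬(2 ≤ b - a - ℓ ∧ 2 ≤ a ∧ ltr w (a - 1) = ltr w (b - 1))

/-- `LRep A w j` : the maximal `|u|` such that `u·v` is a suffix of `w[1..j-1]`,
`u` is a prefix of `w[j..n]`, and `|u| + |v| ≤ A·|u|` (0 if no such `u`). -/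
noncomputable def LRep (A : ℝ) (w : List α) (j : ℕ) : ℕ :=
  sSup {m | ∃ u v : List α, u.length = m ∧
    (u ++ v) <:+ fac w 1 (j - 1) ∧ u <+: fac w j w.length ∧
    (u.length : ℝ) + (v.length : ℝ) ≤ A * (u.length : ℝ)}

/-- `SC w j` : the longest arm of a square centred at position `j`. -/
noncomputable def SC (w : List α) (j : ℕ) : ℕ :=
  sSup {m | ∃ u : List α, u.length = m ∧ u ≠ [] ∧
    u <:+ fac w 1 (j - 1) ∧ u <+: fac w j w.length}

/-! Everything is governed by the period `b - a` of an occurrence. The gap condition is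
`b - a ≤ A * ℓ`, and the condition on `j` in the theorem is `b - a ≤ A * (b + ℓ - j)`: cutting off
the first `j - b` letters of both arms leaves an `A`-gapped repeat whose right arm starts at `j`.
Conversely, take a repeat realising `LRep A w j`. If its gap is empty it is a square centred at `j`.
Otherwise extend it to the left, keeping the gap nonempty, for as long as possible. The end of the
right arm does not move, so an extension to the right would give a longer arm at `j`; hence the
extended repeat is maximal. -/

theorem isGreatest_insert_zero_sSup {S : Set ℕ} (hS : BddAbove S) :
    IsGreatest (insert 0 S) (sSup S) := by
  rcases S.eq_empty_or_nonempty with rfl | hne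
  · simp
  · exact ⟨.inr (Nat.sSup_mem hne hS), by
      rintro m (rfl | hm)
      exacts [Nat.zero_le _, le_csSup hS hm]⟩

/-- Two equal factors of length `ℓ` of `w` starting at positions `a` and `b`, the first ending
before the second starts. In contrast to `GapRepOcc`, the gap and the arms may be empty and the gap
is not bounded, so that squares and the trivial repeat are covered too. -/
structure RepOcc (w : List α) (a b ℓ : ℕ) : Prop where
  one_le : 1 ≤ a
  add_le : a + ℓ ≤ b
  add_le_length : b + ℓ ≤ w.length + 1
  ltr_eq : ∀ t < ℓ, ltr w (a + t) = ltr w (b + t)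

section

variable {w u v : List α} {A : ℝ} {a b j k ℓ : ℕ}

namespace RepOcc

theorem of_arm_eq_zero (hj : 1 ≤ j) (hjw : j ≤ w.length + 1) : RepOcc w j j 0 :=
  ⟨hj, le_rfl, hjw, fun _ ht => absurd ht (Nat.not_lt_zero _)⟩

theorem drop_arm (h : RepOcc w a b (k + ℓ)) : RepOcc w (a + k) (b + k) ℓ where
  one_le := h.one_le.trans (Nat.le_add_right a k)
  add_le := by have := h.add_le; omega
  add_le_length := by have := h.add_le_length; omega
  ltr_eq t ht := by simpa only [add_assoc] using h.ltr_eq (k + t) (by omega)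

theorem extend_right (h : RepOcc w a b ℓ) (hgap : a + ℓ < b) (hw : b + ℓ ≤ w.length)
    (heq : ltr w (a + ℓ) = ltr w (b + ℓ)) : RepOcc w a b (ℓ + 1) where
  one_le := h.one_le
  add_le := hgap
  add_le_length := by omega
  ltr_eq t ht := by
    rcases Nat.lt_succ_iff_lt_or_eq.1 ht with ht | rfl
    exacts [h.ltr_eq t ht, heq]

theorem extend_left (h : RepOcc w (a + 1) (b + 1) ℓ) (ha : 1 ≤ a) (hgap : a + ℓ < b)
    (heq : ltr w a = ltr w b) : RepOcc w a b (ℓ + 1) where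
  one_le := ha
  add_le := hgap
  add_le_length := by have := h.add_le_length; omega
  ltr_eq
    | 0, _ => heq
    | t + 1, ht => by
      simpa only [add_assoc, add_comm 1] using h.ltr_eq t (Nat.lt_of_succ_lt_succ ht)

theorem exists_left_maximal (h : RepOcc w a b ℓ) (hgap : a + ℓ < b) :
    ∃ a' b' k, a' + k = a ∧ b' + k = b ∧ RepOcc w a' b' (ℓ + k) ∧ a' + (ℓ + k) < b' ∧
      ¬(2 ≤ b' - a' - (ℓ + k) ∧ 2 ≤ a' ∧ ltr w (a' - 1) = ltr w (b' - 1)) := by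
  induction a generalizing b ℓ with
  | zero => exact absurd h.one_le (by omega)
  | succ a ih =>
    by_cases hext : 2 ≤ b - (a + 1) - ℓ ∧ 2 ≤ a + 1 ∧ ltr w (a + 1 - 1) = ltr w (b - 1)
    · obtain ⟨hgap₂, ha, heq⟩ := hext
      obtain ⟨b, rfl⟩ : ∃ c, b = c + 1 := ⟨b - 1, by omega⟩
      obtain ⟨a', b', k, rfl, rfl, h', hgap', hmax⟩ :=
        ih (h.extend_left (by omega) (by omega) heq) (by omega)
      rw [add_right_comm, add_assoc] at h' hgap' hmax
      exact ⟨a', b', k + 1, rfl, rfl, h', hgap', hmax⟩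
    · exact ⟨a + 1, b, 0, rfl, rfl, h, hgap, hext⟩

end RepOcc

theorem take_drop_eq_take_drop_iff {p q : ℕ} :
    (w.drop p).take ℓ = (w.drop q).take ℓ ↔ ∀ t < ℓ, w[p + t]? = w[q + t]? := by
  simp only [List.ext_getElem?_iff, List.getElem?_take, List.getElem?_drop]
  refine forall_congr' fun t => ?_
  split_ifs with ht <;> simp [ht]

theorem repOcc_iff_take_drop_eq {p q : ℕ} :
    RepOcc w (p + 1) (q + 1) ℓ ↔
      p + ℓ ≤ q ∧ q + ℓ ≤ w.length ∧ (w.drop p).take ℓ = (w.drop q).take ℓ := by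
  have hltr (i t : ℕ) : ltr w (i + 1 + t) = w[i + t]? := by
    rw [ltr, add_right_comm, Nat.add_sub_cancel]
  rw [take_drop_eq_take_drop_iff]
  constructor
  · rintro ⟨-, hpq, hq, heq⟩
    exact ⟨by omega, by omega, by simpa only [hltr] using heq⟩
  · rintro ⟨hpq, hq, heq⟩
    exact ⟨by omega, by omega, by omega, by simpa only [hltr] using heq⟩

theorem fac_one_left (w : List α) (i : ℕ) : fac w 1 i = w.take i := by
  simp [fac]

theorem fac_length_right (w : List α) (i : ℕ) : fac w i w.length = w.drop (i - 1) := by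
  simp [fac]

theorem repOcc_of_suffix_of_prefix (hj : 1 ≤ j) (hjw : j ≤ w.length + 1)
    (hsuf : u ++ v <:+ fac w 1 (j - 1)) (hpre : u <+: fac w j w.length) :
    ∃ a, a + (u.length + v.length) = j ∧ RepOcc w a j u.length := by
  obtain ⟨q, rfl⟩ : ∃ q, j = q + 1 := ⟨j - 1, by omega⟩
  rw [fac_one_left, Nat.add_sub_cancel] at hsuf
  rw [fac_length_right, Nat.add_sub_cancel] at hpre
  obtain ⟨s, hs⟩ := hsuf
  have hslen : s.length + (u.length + v.length) = q := by
    simpa [Nat.min_eq_left (Nat.le_of_succ_le_succ hjw)] using congrArg List.length hs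
  have hplen : u.length ≤ w.length - q := by simpa using hpre.length_le
  have hleft : (w.drop s.length).take u.length = u := by
    rw [← List.take_append_drop q w, ← hs]
    simp
  refine ⟨s.length + 1, by omega, repOcc_iff_take_drop_eq.2 ⟨by omega, by omega, ?_⟩⟩
  rw [hleft, ← List.prefix_iff_eq_take.1 hpre]

theorem RepOcc.exists_suffix_prefix (h : RepOcc w a j ℓ) :
    ∃ u v : List α, u.length = ℓ ∧ a + (u.length + v.length) = j ∧
      u ++ v <:+ fac w 1 (j - 1) ∧ u <+: fac w j w.length := by
  obtain ⟨p, rfl⟩ : ∃ p, a = p + 1 := ⟨a - 1, by have := h.one_le; omega⟩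
  obtain ⟨q, rfl⟩ : ∃ q, j = q + 1 := ⟨j - 1, by have := h.add_le; omega⟩
  obtain ⟨hpq, hq, heq⟩ := repOcc_iff_take_drop_eq.1 h
  have hleft : ((w.take q).drop p).take ℓ = (w.drop q).take ℓ := by
    rw [List.drop_take, List.take_take, Nat.min_eq_left (by omega), heq]
  refine ⟨((w.take q).drop p).take ℓ, ((w.take q).drop p).drop ℓ, ?_, ?_, ?_, ?_⟩
  · simp only [List.length_take, List.length_drop]
    omega
  · simp only [List.length_take, List.length_drop]
    omega
  · rw [List.take_append_drop, fac_one_left, Nat.add_sub_cancel]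
    exact List.drop_suffix _ _
  · rw [hleft, fac_length_right, Nat.add_sub_cancel]
    exact List.take_prefix _ _

theorem isGreatest_LRep (hj : 1 ≤ j) (hjw : j ≤ w.length + 1) :
    IsGreatest {ℓ : ℕ | ∃ a, RepOcc w a j ℓ ∧ (j : ℝ) - a ≤ A * ℓ} (LRep A w j) := by
  have hset : {m | ∃ u v : List α, u.length = m ∧ u ++ v <:+ fac w 1 (j - 1) ∧
      u <+: fac w j w.length ∧ (u.length : ℝ) + v.length ≤ A * u.length} =
      {ℓ : ℕ | ∃ a, RepOcc w a j ℓ ∧ (j : ℝ) - a ≤ A * ℓ} := by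
    ext ℓ
    constructor
    · rintro ⟨u, v, rfl, hsuf, hpre, hA⟩
      obtain ⟨a, rfl, h⟩ := repOcc_of_suffix_of_prefix hj hjw hsuf hpre
      exact ⟨a, h, by push_cast; linarith⟩
    · rintro ⟨a, h, hA⟩
      obtain ⟨u, v, rfl, rfl, hsuf, hpre⟩ := h.exists_suffix_prefix
      exact ⟨u, v, rfl, hsuf, hpre, by push_cast at hA; linarith⟩
  rw [LRep, hset]
  have hbdd : BddAbove {ℓ : ℕ | ∃ a, RepOcc w a j ℓ ∧ (j : ℝ) - a ≤ A * ℓ} :=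
    ⟨j, fun ℓ ⟨_, h, _⟩ => (Nat.le_add_left _ _).trans h.add_le⟩
  exact ⟨Nat.sSup_mem ⟨0, j, .of_arm_eq_zero hj hjw, by simp⟩ hbdd, fun _ => le_csSup hbdd⟩

theorem isGreatest_SC (hj : 1 ≤ j) (hjw : j ≤ w.length + 1) :
    IsGreatest {ℓ | ∃ a, RepOcc w a j ℓ ∧ a + ℓ = j} (SC w j) := by
  have hset : insert 0 {m | ∃ u : List α, u.length = m ∧ u ≠ [] ∧ u <:+ fac w 1 (j - 1) ∧
      u <+: fac w j w.length} = {ℓ | ∃ a, RepOcc w a j ℓ ∧ a + ℓ = j} := by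
    ext ℓ
    constructor
    · rintro (rfl | ⟨u, rfl, -, hsuf, hpre⟩)
      · exact ⟨j, .of_arm_eq_zero hj hjw, rfl⟩
      · obtain ⟨a, haj, h⟩ :=
          repOcc_of_suffix_of_prefix (v := []) hj hjw (by rwa [List.append_nil]) hpre
        exact ⟨a, h, haj⟩
    · rintro ⟨a, h, haj⟩
      obtain ⟨u, v, rfl, hlen, hsuf, hpre⟩ := h.exists_suffix_prefix
      obtain rfl : v = [] := List.length_eq_zero_iff.1 (by omega)
      rw [List.append_nil] at hsuf
      rcases eq_or_ne u [] with rfl | hu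
      exacts [.inl rfl, .inr ⟨u, rfl, hu, hsuf, hpre⟩]
  rw [← hset]
  refine isGreatest_insert_zero_sSup ⟨(fac w 1 (j - 1)).length, ?_⟩
  rintro _ ⟨u, rfl, -, hsuf, -⟩
  exact hsuf.length_le

theorem gapRepOcc_iff :
    GapRepOcc A w a b ℓ ↔ RepOcc w a b ℓ ∧ 1 ≤ ℓ ∧ a + ℓ < b ∧ (b : ℝ) - a ≤ A * ℓ := by
  have hperiod (h : a + ℓ < b) : (ℓ : ℝ) + ((b - a - ℓ : ℕ) : ℝ) = b - a := by
    rw [Nat.sub_sub, Nat.cast_sub h.le]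
    push_cast
    ring
  constructor
  · rintro ⟨ha, hℓ, hgap, hw, heq, hA⟩
    exact ⟨⟨ha, hgap.le, by omega, heq⟩, hℓ, hgap, hperiod hgap ▸ hA⟩
  · rintro ⟨h, hℓ, hgap, hA⟩
    exact ⟨h.one_le, hℓ, hgap, by have := h.add_le_length; omega, h.ltr_eq,
      (hperiod hgap).trans_le hA⟩

theorem period_le_of_gap_eq_zero (hA : 1 ≤ A) (h : a + ℓ = j) : (j : ℝ) - a ≤ A * ℓ := by
  subst h
  rw [Nat.cast_add, add_sub_cancel_left]
  exact le_mul_of_one_le_left (Nat.cast_nonneg ℓ) hA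

theorem cut_arm_bound_iff (hgap : a + ℓ ≤ b) :
    A * ((j : ℝ) - b) ≤ (A - 1) * ℓ - ((b - a - ℓ : ℕ) : ℝ) ↔
      (b : ℝ) - a ≤ A * (b + ℓ - j) := by
  rw [Nat.sub_sub, Nat.cast_sub hgap]
  push_cast
  constructor <;> intro h <;> linarith

theorem GapRepOcc.exists_repOcc_at (hA : 0 ≤ A) (h : GapRepOcc A w a b ℓ) (hbj : b ≤ j)
    (hcut : (b : ℝ) - a ≤ A * (b + ℓ - j)) :
    ∃ a', RepOcc w a' j (b + ℓ - j) ∧ (j : ℝ) - a' ≤ A * (b + ℓ - j : ℕ) := by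
  obtain ⟨hrep, -, hgap, -⟩ := gapRepOcc_iff.1 h
  have hperiod : (0 : ℝ) < b - a := sub_pos.2 (by exact_mod_cast (by omega : a < b))
  have hj : (j : ℝ) < (b + ℓ : ℕ) := by
    push_cast
    exact sub_pos.1 (pos_of_mul_pos_right (hperiod.trans_le hcut) hA)
  obtain ⟨k, rfl⟩ := Nat.exists_eq_add_of_le hbj
  obtain ⟨r, rfl⟩ : ∃ r, ℓ = k + r := Nat.exists_eq_add_of_le (by have := Nat.cast_lt.1 hj; omega)
  rw [← add_assoc, Nat.add_sub_cancel_left]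
  exact ⟨a + k, hrep.drop_arm, by push_cast at hcut ⊢; linarith⟩

theorem RepOcc.exists_maxGapRepOcc (hA : 0 ≤ A) (h : RepOcc w a j ℓ) (hgap : a + ℓ < j)
    (hperiod : (j : ℝ) - a ≤ A * ℓ) (hlongest : ¬RepOcc w a j (ℓ + 1)) :
    ∃ a' b' ℓ', MaxGapRepOcc A w a' b' ℓ' ∧ b' ≤ j ∧ b' + ℓ' = j + ℓ ∧
      (b' : ℝ) - a' ≤ A * (b' + ℓ' - j) := by
  have hℓ : 1 ≤ ℓ := by
    by_contra! hzero
    obtain rfl : ℓ = 0 := by omega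
    have : (a : ℝ) < j := by exact_mod_cast hgap
    rw [Nat.cast_zero, mul_zero] at hperiod
    linarith
  obtain ⟨a', b', k, rfl, rfl, h', hgap', hleft⟩ := h.exists_left_maximal hgap
  have hperiod' : (b' : ℝ) - a' ≤ A * ℓ := by push_cast at hperiod; linarith
  have hgapped : (b' : ℝ) - a' ≤ A * (ℓ + k : ℕ) :=
    hperiod'.trans (mul_le_mul_of_nonneg_left (by simp) hA)
  have hright : ¬(2 ≤ b' - a' - (ℓ + k) ∧ b' + (ℓ + k) ≤ w.length ∧
      ltr w (a' + (ℓ + k)) = ltr w (b' + (ℓ + k))) := by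
    rintro ⟨-, hw, heq⟩
    rw [add_comm ℓ, ← add_assoc] at hw
    rw [add_comm ℓ, ← add_assoc, ← add_assoc] at heq
    exact hlongest (h.extend_right hgap hw heq)
  exact ⟨a', b', ℓ + k, ⟨gapRepOcc_iff.2 ⟨h', by omega, hgap', hgapped⟩, hright, hleft⟩,
    Nat.le_add_right _ _, by omega, by push_cast; linarith⟩

end

theorem LRep_eq_max_over_maximal_gapped_repeats_and_centred_squares
    (A : ℝ) (hA : 1 ≤ A) (w : List α) (n : ℕ) (hlen : w.length = n) (hn : 1 ≤ n)
    (j : ℕ) (hj : 1 ≤ j) (hjn : j ≤ n) :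
    LRep A w j = sSup ({SC w j} ∪ {m : ℕ | ∃ a b ℓ : ℕ, MaxGapRepOcc A w a b ℓ ∧ b ≤ j ∧
      A * ((j : ℝ) - (b : ℝ)) ≤ (A - 1) * (ℓ : ℝ) - ((b - a - ℓ : ℕ) : ℝ) ∧
      m = b + ℓ - j}) := by
  subst hlen
  have hA₀ : 0 ≤ A := zero_le_one.trans hA
  obtain ⟨⟨a, hrep, hperiod⟩, hLRep⟩ := isGreatest_LRep (A := A) hj (Nat.le_succ_of_le hjn)
  obtain ⟨⟨s, hsq, hsj⟩, hSC⟩ := isGreatest_SC hj (Nat.le_succ_of_le hjn)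
  have hSC_le : SC w j ≤ LRep A w j := hLRep ⟨s, hsq, period_le_of_gap_eq_zero hA hsj⟩
  refine (IsGreatest.csSup_eq ⟨?_, ?_⟩).symm
  · rcases hrep.add_le.eq_or_lt with hsquare | hgap
    · exact .inl (le_antisymm hSC_le (hSC ⟨a, hrep, hsquare⟩)).symm
    · have hlongest : ¬RepOcc w a j (LRep A w j + 1) := fun hext =>
        (hLRep ⟨a, hext, hperiod.trans (by gcongr; simp)⟩).not_gt (Nat.lt_succ_self _)
      obtain ⟨a', b', ℓ, hmax, hbj, hend, hcut⟩ :=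
        hrep.exists_maxGapRepOcc hA₀ hgap hperiod hlongest
      have hgap' : a' + ℓ ≤ b' := (gapRepOcc_iff.1 hmax.1).1.add_le
      exact .inr ⟨a', b', ℓ, hmax, hbj, (cut_arm_bound_iff hgap').2 hcut, by omega⟩
  · rintro m (rfl | ⟨a', b, ℓ, hmax, hbj, hcut, rfl⟩)
    · exact hSC_le
    · have hgap : a' + ℓ ≤ b := (gapRepOcc_iff.1 hmax.1).1.add_le
      exact hLRep (hmax.1.exists_repOcc_at hA₀ hbj ((cut_arm_bound_iff hgap).1 hcut))
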